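/- arXiv:2503.02243 — 4 statements merged into one kernel-verified Lean document; each statement's English description precedes it below -/
import Mathlib

section
/- For every integer n ≥ 1 and every x ≥ 0, B_n(t;x) = (ξ'(p_n(x))/ξ(p_n(x)))·x + (1/n)·[ S'(1)/S(1) + V'(1)·ξ'(p_n(x))/ξ(p_n(x)) ], where B_n(t;x) denotes the operator applied to the identity function t ↦ t. -/
open Real MeasureTheory Filter Topology

/-- `p_n(x) = n² x² T(1) + n x U(1) + V(1)`. -/
noncomputable def pnx (T U V : ℝ → ℝ) (n : ℕ) (x : ℝ) : ℝ :=
  (n : ℝ) ^ 2 * x ^ 2 * T 1 + (n : ℝ) * x * U 1 + V 1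

/-- The Boas–Buck type operator `B_n(f;x)`. -/
noncomputable def Bop (ξ S T U V : ℝ → ℝ) (Θ : ℕ → ℝ → ℝ) (n : ℕ) (f : ℝ → ℝ) (x : ℝ) : ℝ :=
  (S 1 * ξ (pnx T U V n x))⁻¹ * ∑' j : ℕ, Θ j ((n : ℝ) * x) * f ((j : ℝ) / (n : ℝ))

/-- Termwise differentiation of a power series with exponents shifted by `k`. -/
theorem ps_deriv (R : ℝ) (a : ℕ → ℝ) (k : ℕ) (F : ℝ → ℝ)
    (h : ∀ s ∈ Set.Ioo (-R) R, HasSum (fun j : ℕ => a j * s ^ (j + k)) (F s))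
    (x : ℝ) (hx : x ∈ Set.Ioo (-R) R) :
    HasDerivAt F (∑' j : ℕ, a j * (((j + k : ℕ) : ℝ) * x ^ (j + k - 1))) x := by
  have hxR : |x| < R := abs_lt.mpr hx
  obtain ⟨b, hb1, hb2⟩ := exists_between hxR
  obtain ⟨c, hc1, hc2⟩ := exists_between hb2
  have hb0 : 0 < b := lt_of_le_of_lt (abs_nonneg x) hb1
  have hc0 : 0 < c := hb0.trans hc1
  have hcm : c ∈ Set.Ioo (-R) R := ⟨by linarith, hc2⟩
  obtain ⟨M, hM⟩ := (h c hcm).summable.tendsto_atTop_zero.abs.bddAbove_range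
  have hM' : ∀ j, |a j| * c ^ (j + k) ≤ M := by
    intro j
    have := hM ⟨j, rfl⟩
    simpa [abs_mul, abs_pow, abs_of_pos hc0] using this
  have hq0 : 0 ≤ b / c := by positivity
  have hq1 : b / c < 1 := (div_lt_one hc0).mpr hc1
  have hs : Summable (fun j : ℕ => M / b * (((j + k : ℕ) : ℝ) * (b / c) ^ (j + k))) := by
    have h1 := summable_pow_mul_geometric_of_norm_lt_one 1
      (show ‖b / c‖ < 1 by rwa [Real.norm_of_nonneg hq0])
    simp only [pow_one] at h1
    exact ((summable_nat_add_iff k).mpr h1).mul_left _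
  have key := hasDerivAt_tsum_of_isPreconnected (𝕜 := ℝ) (t := Set.Ioo (-b) b) (y₀ := x) (y := x)
    (g := fun (j : ℕ) (y : ℝ) => a j * y ^ (j + k))
    (g' := fun (j : ℕ) (y : ℝ) => a j * (((j + k : ℕ) : ℝ) * y ^ (j + k - 1)))
    hs isOpen_Ioo isPreconnected_Ioo
    (fun j y _ => (hasDerivAt_pow (j + k) y).const_mul (a j))
    (by
      intro j y hy
      have hy' : |y| ≤ b := (abs_lt.mpr hy).le
      rw [Real.norm_eq_abs, abs_mul, abs_mul, abs_pow, Nat.abs_cast]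
      have h2 := hM' j
      rcases hm : j + k with _ | m
      · simp
      · rw [hm] at h2
        rw [Nat.add_sub_cancel]
        have h3 : |a j| ≤ M / c ^ (m + 1) := by
          rw [le_div_iff₀ (by positivity)]; exact h2
        calc |a j| * (((m + 1 : ℕ) : ℝ) * |y| ^ m)
            ≤ M / c ^ (m + 1) * (((m + 1 : ℕ) : ℝ) * b ^ m) := by
              have h4 : 0 ≤ M / c ^ (m + 1) := (abs_nonneg _).trans h3
              gcongr
          _ = M / b * (((m + 1 : ℕ) : ℝ) * (b / c) ^ (m + 1)) := by
            rw [div_pow]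
            field_simp
            ring)
    (abs_lt.mp hb1) (h x hx).summable (abs_lt.mp hb1)
  refine key.congr_of_eventuallyEq ?_
  filter_upwards [isOpen_Ioo.mem_nhds hx] with s hs'
  exact (h s hs').tsum_eq.symm

theorem stmt1
    (ρ : ℝ) (hρ : 1 < ρ)
    (ξ S T U V : ℝ → ℝ) (Θ : ℕ → ℝ → ℝ)
    (p q r u v : ℕ → ℝ)
    (hξser : ∀ t : ℝ, HasSum (fun j : ℕ => p j * t ^ j) (ξ t))
    (hξnn : ∀ t : ℝ, 0 ≤ ξ t)
    (hSser : ∀ s ∈ Set.Ioo (-ρ) ρ, HasSum (fun j : ℕ => q j * s ^ j) (S s))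
    (hTser : ∀ s ∈ Set.Ioo (-ρ) ρ, HasSum (fun j : ℕ => r j * s ^ (j + 1)) (T s))
    (hUser : ∀ s ∈ Set.Ioo (-ρ) ρ, HasSum (fun j : ℕ => u j * s ^ (j + 2)) (U s))
    (hVser : ∀ s ∈ Set.Ioo (-ρ) ρ, HasSum (fun j : ℕ => v j * s ^ (j + 3)) (V s))
    (hS1 : 0 < S 1)
    (hT'1 : deriv T 1 = 0) (hT''1 : deriv (deriv T) 1 = 0) (hU'1 : deriv U 1 = 1)
    (hΘnn : ∀ (j : ℕ) (y : ℝ), 0 ≤ y → 0 ≤ Θ j y)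
    (hgen : ∀ y : ℝ, 0 ≤ y → ∀ s ∈ Set.Ioo (-ρ) ρ,
      HasSum (fun j : ℕ => Θ j y * s ^ j) (S s * ξ (y ^ 2 * T s + y * U s + V s)))
    (hξp : ∀ (m : ℕ), 1 ≤ m → ∀ y : ℝ, 0 ≤ y → 0 < ξ (pnx T U V m y))
    (n : ℕ) (hn : 1 ≤ n) (x : ℝ) (hx : 0 ≤ x) :
    Bop ξ S T U V Θ n (fun t => t) x =
      deriv ξ (pnx T U V n x) / ξ (pnx T U V n x) * x +
        (1 / (n : ℝ)) * (deriv S 1 / S 1 +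
          deriv V 1 * (deriv ξ (pnx T U V n x) / ξ (pnx T U V n x))) := by
  have hn0 : (n : ℝ) ≠ 0 := by positivity
  have h1m : (1 : ℝ) ∈ Set.Ioo (-ρ) ρ := ⟨by linarith, hρ⟩
  set y : ℝ := (n : ℝ) * x with hy
  have hy0 : 0 ≤ y := by positivity
  have hP : pnx T U V n x = y ^ 2 * T 1 + y * U 1 + V 1 := by
    simp only [pnx, hy]; ring
  have hpos := hξp n hn x hx
  have dS : HasDerivAt S (deriv S 1) 1 :=
    (ps_deriv ρ q 0 S hSser 1 h1m).differentiableAt.hasDerivAt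
  have dT : HasDerivAt T (deriv T 1) 1 :=
    (ps_deriv ρ r 1 T hTser 1 h1m).differentiableAt.hasDerivAt
  have dU : HasDerivAt U (deriv U 1) 1 :=
    (ps_deriv ρ u 2 U hUser 1 h1m).differentiableAt.hasDerivAt
  have dV : HasDerivAt V (deriv V 1) 1 :=
    (ps_deriv ρ v 3 V hVser 1 h1m).differentiableAt.hasDerivAt
  have dξ : HasDerivAt ξ (deriv ξ (pnx T U V n x)) (y ^ 2 * T 1 + y * U 1 + V 1) := by
    rw [← hP]
    refine (ps_deriv (|pnx T U V n x| + 1) p 0 ξ (fun t _ => hξser t) _ ?_).differentiableAt.hasDerivAt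
    exact abs_lt.mp (by linarith)
  have din := ((dT.const_mul (y ^ 2)).add (dU.const_mul y)).add dV
  have dG := dS.mul (HasDerivAt.comp (1 : ℝ) dξ din)
  have dG' := ps_deriv ρ (fun j => Θ j y) 0
    (fun s => S s * ξ (y ^ 2 * T s + y * U s + V s)) (hgen y hy0) 1 h1m
  have e := dG'.unique dG
  simp only [Function.comp, Pi.add_apply] at e
  rw [← hP, hT'1, hU'1] at e
  simp only [one_pow, mul_one, add_zero] at e
  have e2 : ∑' j : ℕ, Θ j y * ((j : ℝ) / (n : ℝ)) = (∑' j : ℕ, Θ j y * (j : ℝ)) / n := by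
    rw [← tsum_div_const]
    simp only [mul_div_assoc]
  unfold Bop
  rw [← hy, e2, e]
  generalize pnx T U V n x = P at *
  rw [hy]
  field_simp
  ring
end

section
/- For every integer n ≥ 1 and every x ≥ 0, B_n(t²;x) = (ξ''(p_n(x))/ξ(p_n(x)))·x² + (x/n)·[ (ξ'(p_n(x))/ξ(p_n(x)))·(2S'(1)/S(1) + U''(1) + 1) + 2V'(1)·ξ''(p_n(x))/ξ(p_n(x)) ] + (1/n²)·[ (S''(1)+S'(1))/S(1) + (2S'(1)V'(1)/S(1) + V''(1) + V'(1))·ξ'(p_n(x))/ξ(p_n(x)) + (V'(1))²·ξ''(p_n(x))/ξ(p_n(x)) ], where B_n(t²;x) denotes the operator applied to the function t ↦ t². -/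
open Real MeasureTheory Filter Topology

lemma ps_deriv_s2 (ρ : ℝ) (a : ℕ → ℝ) (F : ℝ → ℝ)
    (h : ∀ s ∈ Set.Ioo (-ρ) ρ, HasSum (fun j : ℕ => a j * s ^ j) (F s)) :
    ∀ s ∈ Set.Ioo (-ρ) ρ, DifferentiableAt ℝ F s ∧
      HasSum (fun j : ℕ => ((j + 1 : ℕ) : ℝ) * a (j + 1) * s ^ j) (deriv F s) := by
  intro s hs
  have hs' : |s| < ρ := abs_lt.mpr ⟨hs.1, hs.2⟩
  obtain ⟨R, hR1, hR2⟩ := exists_between hs'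
  obtain ⟨R', hR'1, hR'2⟩ := exists_between hR2
  have hR0 : 0 < R := lt_of_le_of_lt (abs_nonneg s) hR1
  have hR'0 : 0 < R' := hR0.trans hR'1
  have hsum := (h R' ⟨by linarith, hR'2⟩).summable
  obtain ⟨C, hC⟩ := hsum.tendsto_atTop_zero.norm.bddAbove_range
  have hC' : ∀ j, |a j| * R' ^ j ≤ C := by
    intro j
    have := hC ⟨j, rfl⟩
    simpa [abs_mul, abs_of_pos hR'0] using this
  have hq : Summable (fun j : ℕ => (j : ℝ) * (R / R') ^ j) := by
    have := summable_pow_mul_geometric_of_norm_lt_one (R := ℝ) 1 (r := R / R') (by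
      rw [Real.norm_eq_abs, abs_of_pos (by positivity)]
      exact (div_lt_one hR'0).mpr hR'1)
    simpa using this
  have hu : Summable (fun j : ℕ => (C / R) * ((j : ℝ) * (R / R') ^ j)) := hq.mul_left _
  have hbound : ∀ (j : ℕ) (y : ℝ), y ∈ Set.Ioo (-R) R →
      ‖a j * ((j : ℝ) * y ^ (j - 1))‖ ≤ (C / R) * ((j : ℝ) * (R / R') ^ j) := by
    intro j y hy
    have hy' : |y| ≤ R := (abs_lt.mpr ⟨hy.1, hy.2⟩).le
    rcases j with _ | j
    · simp
    · simp only [Real.norm_eq_abs, abs_mul, abs_pow, Nat.abs_cast, Nat.add_sub_cancel]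
      have h1 : |y| ^ j ≤ R ^ j := pow_le_pow_left₀ (abs_nonneg _) hy' _
      have h2 : |a (j + 1)| ≤ C / R' ^ (j + 1) := by
        rw [le_div_iff₀ (by positivity)]; exact hC' _
      calc |a (j + 1)| * (((j + 1 : ℕ) : ℝ) * |y| ^ j)
          ≤ (C / R' ^ (j + 1)) * (((j + 1 : ℕ) : ℝ) * R ^ j) := by
            gcongr
            exact (abs_nonneg _).trans h2
        _ = _ := by
            rw [div_pow]
            field_simp
            ring
  have hsR : s ∈ Set.Ioo (-R) R := abs_lt.mp hR1
  have hd : HasDerivAt (fun z => ∑' j : ℕ, a j * z ^ j)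
      (∑' j : ℕ, a j * ((j : ℝ) * s ^ (j - 1))) s :=
    hasDerivAt_tsum_of_isPreconnected (g := fun j z => a j * z ^ j)
      (g' := fun j z => a j * ((j : ℝ) * z ^ (j - 1))) hu isOpen_Ioo isPreconnected_Ioo
      (fun j y _ => (hasDerivAt_pow j y).const_mul _) hbound hsR (h s hs).summable hsR
  have hFe : F =ᶠ[𝓝 s] (fun z => ∑' j : ℕ, a j * z ^ j) := by
    filter_upwards [isOpen_Ioo.mem_nhds hs] with z hz
    exact (h z hz).tsum_eq.symm
  have hF := hd.congr_of_eventuallyEq hFe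
  refine ⟨hF.differentiableAt, ?_⟩
  rw [hF.deriv]
  have hsm : Summable (fun j : ℕ => a j * ((j : ℝ) * s ^ (j - 1))) :=
    Summable.of_norm_bounded hu (fun j => hbound j s hsR)
  have := (hasSum_nat_add_iff' 1).mpr hsm.hasSum
  simp only [Finset.range_one, Finset.sum_singleton, Nat.cast_zero, zero_mul, mul_zero,
    sub_zero, Nat.add_sub_cancel] at this
  have e : (fun j : ℕ => ((j + 1 : ℕ) : ℝ) * a (j + 1) * s ^ j) =
      fun j : ℕ => a (j + 1) * (((j + 1 : ℕ) : ℝ) * s ^ j) := by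
    funext j; ring
  rw [e]
  exact this

lemma ps_two (ρ : ℝ) (a : ℕ → ℝ) (F : ℝ → ℝ)
    (h : ∀ s ∈ Set.Ioo (-ρ) ρ, HasSum (fun j : ℕ => a j * s ^ j) (F s)) :
    ∀ s ∈ Set.Ioo (-ρ) ρ, DifferentiableAt ℝ F s ∧ DifferentiableAt ℝ (deriv F) s := by
  intro s hs
  have h1 := ps_deriv_s2 ρ a F h
  exact ⟨(h1 s hs).1, (ps_deriv_s2 ρ _ _ (fun s hs => (h1 s hs).2) s hs).1⟩

lemma ps_two_shift (ρ : ℝ) (k : ℕ) (a : ℕ → ℝ) (F : ℝ → ℝ)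
    (h : ∀ s ∈ Set.Ioo (-ρ) ρ, HasSum (fun j : ℕ => a j * s ^ (j + k)) (F s)) :
    ∀ s ∈ Set.Ioo (-ρ) ρ, DifferentiableAt ℝ F s ∧ DifferentiableAt ℝ (deriv F) s := by
  apply ps_two ρ (fun j => if j < k then 0 else a (j - k))
  intro s hs
  rw [← hasSum_nat_add_iff' k]
  rw [Finset.sum_eq_zero (fun i hi => by simp [Finset.mem_range.mp hi])]
  simpa using h s hs

lemma ps_moment (ρ : ℝ) (hρ : 1 < ρ) (a : ℕ → ℝ) (F : ℝ → ℝ)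
    (h : ∀ s ∈ Set.Ioo (-ρ) ρ, HasSum (fun j : ℕ => a j * s ^ j) (F s)) :
    HasSum (fun j : ℕ => a j * (j : ℝ) ^ 2) (deriv (deriv F) 1 + deriv F 1) := by
  have h1 := ps_deriv_s2 ρ a F h
  have h2 := ps_deriv_s2 ρ _ _ (fun s hs => (h1 s hs).2)
  have m1 : (1 : ℝ) ∈ Set.Ioo (-ρ) ρ := ⟨by linarith, hρ⟩
  have e1 := (h1 1 m1).2
  have e2 := (h2 1 m1).2
  have f1 : HasSum (fun j : ℕ => (j : ℝ) * a j) (deriv F 1) := by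
    rw [← hasSum_nat_add_iff' 1]
    simpa using e1
  have f2 : HasSum (fun j : ℕ => (j : ℝ) * ((j : ℝ) - 1) * a j) (deriv (deriv F) 1) := by
    rw [← hasSum_nat_add_iff' 2]
    have e : (fun j : ℕ => ((j + 1 : ℕ) : ℝ) * (((j + 1 + 1 : ℕ) : ℝ) * a (j + 1 + 1)) * 1 ^ j) =
        fun j : ℕ => ((j + 2 : ℕ) : ℝ) * (((j + 2 : ℕ) : ℝ) - 1) * a (j + 2) := by
      funext j; push_cast; ring
    rw [e] at e2
    simpa [Finset.sum_range_succ] using e2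
  convert f2.add f1 using 2 with j
  ring

theorem stmt2
    (ρ : ℝ) (hρ : 1 < ρ)
    (ξ S T U V : ℝ → ℝ) (Θ : ℕ → ℝ → ℝ)
    (p q r u v : ℕ → ℝ)
    (hξser : ∀ t : ℝ, HasSum (fun j : ℕ => p j * t ^ j) (ξ t))
    (hξnn : ∀ t : ℝ, 0 ≤ ξ t)
    (hSser : ∀ s ∈ Set.Ioo (-ρ) ρ, HasSum (fun j : ℕ => q j * s ^ j) (S s))
    (hTser : ∀ s ∈ Set.Ioo (-ρ) ρ, HasSum (fun j : ℕ => r j * s ^ (j + 1)) (T s))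
    (hUser : ∀ s ∈ Set.Ioo (-ρ) ρ, HasSum (fun j : ℕ => u j * s ^ (j + 2)) (U s))
    (hVser : ∀ s ∈ Set.Ioo (-ρ) ρ, HasSum (fun j : ℕ => v j * s ^ (j + 3)) (V s))
    (hS1 : 0 < S 1)
    (hT'1 : deriv T 1 = 0) (hT''1 : deriv (deriv T) 1 = 0) (hU'1 : deriv U 1 = 1)
    (hΘnn : ∀ (j : ℕ) (y : ℝ), 0 ≤ y → 0 ≤ Θ j y)
    (hgen : ∀ y : ℝ, 0 ≤ y → ∀ s ∈ Set.Ioo (-ρ) ρ,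
      HasSum (fun j : ℕ => Θ j y * s ^ j) (S s * ξ (y ^ 2 * T s + y * U s + V s)))
    (hξp : ∀ (m : ℕ), 1 ≤ m → ∀ y : ℝ, 0 ≤ y → 0 < ξ (pnx T U V m y))
    (n : ℕ) (hn : 1 ≤ n) (x : ℝ) (hx : 0 ≤ x) :
    Bop ξ S T U V Θ n (fun t => t ^ 2) x =
      deriv (deriv ξ) (pnx T U V n x) / ξ (pnx T U V n x) * x ^ 2 +
        (x / (n : ℝ)) *
          (deriv ξ (pnx T U V n x) / ξ (pnx T U V n x) *
              (2 * deriv S 1 / S 1 + deriv (deriv U) 1 + 1) +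
            2 * deriv V 1 * (deriv (deriv ξ) (pnx T U V n x) / ξ (pnx T U V n x))) +
        (1 / (n : ℝ) ^ 2) *
          ((deriv (deriv S) 1 + deriv S 1) / S 1 +
            (2 * deriv S 1 * deriv V 1 / S 1 + deriv (deriv V) 1 + deriv V 1) *
              (deriv ξ (pnx T U V n x) / ξ (pnx T U V n x)) +
            (deriv V 1) ^ 2 * (deriv (deriv ξ) (pnx T U V n x) / ξ (pnx T U V n x))) := by
  have hn0 : (n : ℝ) ≠ 0 := by positivity
  have hξ : ∀ t, DifferentiableAt ℝ ξ t ∧ DifferentiableAt ℝ (deriv ξ) t := fun t =>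
    ps_two (|t| + 1) p ξ (fun s _ => hξser s) t (abs_lt.mp (lt_add_one _))
  have hS := ps_two ρ q S hSser
  have hT := ps_two_shift ρ 1 r T hTser
  have hU := ps_two_shift ρ 2 u U hUser
  have hV := ps_two_shift ρ 3 v V hVser
  have m1 : (1 : ℝ) ∈ Set.Ioo (-ρ) ρ := ⟨by linarith, hρ⟩
  obtain ⟨y, hy⟩ : ∃ y : ℝ, y = n * x := ⟨_, rfl⟩
  have hy0 : 0 ≤ y := by rw [hy]; positivity
  have hmom := ps_moment ρ hρ (fun j => Θ j y) _ (hgen y hy0)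
  have hφ : ∀ s ∈ Set.Ioo (-ρ) ρ, HasDerivAt (fun s => y ^ 2 * T s + y * U s + V s)
      (y ^ 2 * deriv T s + y * deriv U s + deriv V s) s := fun s hs =>
    (((hT s hs).1.hasDerivAt.const_mul _).add ((hU s hs).1.hasDerivAt.const_mul _)).add
      (hV s hs).1.hasDerivAt
  have hφ2 : HasDerivAt (fun s => y ^ 2 * deriv T s + y * deriv U s + deriv V s)
      (y ^ 2 * deriv (deriv T) 1 + y * deriv (deriv U) 1 + deriv (deriv V) 1) 1 :=
    (((hT 1 m1).2.hasDerivAt.const_mul _).add ((hU 1 m1).2.hasDerivAt.const_mul _)).add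
      (hV 1 m1).2.hasDerivAt
  have hG : ∀ s ∈ Set.Ioo (-ρ) ρ,
      HasDerivAt (fun s => S s * ξ (y ^ 2 * T s + y * U s + V s))
        (deriv S s * ξ (y ^ 2 * T s + y * U s + V s) +
          S s * (deriv ξ (y ^ 2 * T s + y * U s + V s) *
            (y ^ 2 * deriv T s + y * deriv U s + deriv V s))) s := fun s hs =>
    (hS s hs).1.hasDerivAt.mul
      (HasDerivAt.comp s (h₂ := ξ) (hξ _).1.hasDerivAt (hφ s hs))
  have hG2 := ((hS 1 m1).2.hasDerivAt.mul
      (HasDerivAt.comp (1 : ℝ) (h₂ := ξ) (hξ _).1.hasDerivAt (hφ 1 m1))).add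
    ((hS 1 m1).1.hasDerivAt.mul
      ((HasDerivAt.comp (1 : ℝ) (h₂ := deriv ξ) (hξ _).2.hasDerivAt (hφ 1 m1)).mul hφ2))
  have hGe : deriv (fun s => S s * ξ (y ^ 2 * T s + y * U s + V s)) =ᶠ[𝓝 1]
      (fun s => deriv S s * ξ (y ^ 2 * T s + y * U s + V s) +
          S s * (deriv ξ (y ^ 2 * T s + y * U s + V s) *
            (y ^ 2 * deriv T s + y * deriv U s + deriv V s))) := by
    filter_upwards [isOpen_Ioo.mem_nhds m1] with z hz
    exact (hG z hz).deriv
  have hD2 := (hG2.congr_of_eventuallyEq hGe).deriv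
  rw [hD2, (hG 1 m1).deriv] at hmom
  simp only [Function.comp, Pi.mul_apply] at hmom
  have hP : y ^ 2 * T 1 + y * U 1 + V 1 = pnx T U V n x := by
    rw [hy, pnx]; ring
  rw [hP, hT'1, hT''1, hU'1] at hmom
  have hpos := (hξp n hn x hx).ne'
  have hS0 := hS1.ne'
  have hfun : (fun j : ℕ => Θ j ((n : ℝ) * x) * ((j : ℝ) / (n : ℝ)) ^ 2) =
      fun j : ℕ => Θ j y * (j : ℝ) ^ 2 / (n : ℝ) ^ 2 := by
    funext j
    rw [← hy, div_pow, mul_div_assoc]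
  have hts := (hmom.div_const ((n : ℝ) ^ 2)).tsum_eq
  simp only [Bop]
  rw [hfun, hts]
  subst hy
  field_simp
  ring
end

section
/- For every integer n ≥ 2 and every x ≥ 0, the second moments of the two operators are related by B̃_n(t²;x) = (1/(n−1))·[ n·B_n(t²;x) + B_n(t;x) ], where B_n(t;x), B_n(t²;x), B̃_n(t²;x) denote the operators applied to t ↦ t and t ↦ t² respectively. -/
open Real MeasureTheory Filter Topology

/-- The Euler Beta function value `B(j, n+1) = Γ(j)Γ(n+1)/Γ(j+n+1)`. -/
noncomputable def betaB (j n : ℕ) : ℝ :=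
  Real.Gamma (j : ℝ) * Real.Gamma ((n : ℝ) + 1) / Real.Gamma ((j : ℝ) + (n : ℝ) + 1)

/-- The Baskakov–Durrmeyer type operator `B̃_n(f;x)`. -/
noncomputable def BDop (ξ S T U V : ℝ → ℝ) (Θ : ℕ → ℝ → ℝ) (n : ℕ) (f : ℝ → ℝ) (x : ℝ) : ℝ :=
  (S 1 * ξ (pnx T U V n x))⁻¹ *
    (Θ 0 ((n : ℝ) * x) * f 0 +
      ∑' j : ℕ, (Θ (j + 1) ((n : ℝ) * x) / betaB (j + 1) n) *
        ∫ s in Set.Ioi (0 : ℝ), s ^ j * (1 + s) ^ (-((n : ℝ) + (j : ℝ) + 2)) * f s)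

lemma aux_lim (a k : ℕ) :
    Tendsto (fun s : ℝ => s ^ (a+1) / (1 + s) ^ (a+k+2)) atTop (𝓝 0) := by
  have h1 : Tendsto (fun s : ℝ => (1 + s)⁻¹) atTop (𝓝 0) :=
    tendsto_inv_atTop_zero.comp (tendsto_atTop_add_const_left _ 1 tendsto_id)
  refine squeeze_zero' ?_ ?_ h1
  · filter_upwards [eventually_gt_atTop 0] with s hs
    positivity
  · filter_upwards [eventually_gt_atTop 0] with s hs
    rw [div_le_iff₀ (by positivity)]
    have : (1 + s)⁻¹ * (1 + s) ^ (a+k+2) = (1+s)^(a+k+1) := by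
      field_simp
      ring
    rw [this]
    calc s ^ (a+1) ≤ (1+s)^(a+1) := by gcongr; linarith
      _ ≤ (1+s)^(a+k+1) := by
        apply pow_le_pow_right₀ (by linarith); omega

lemma aux_int (k : ℕ) : ∀ a : ℕ,
    IntegrableOn (fun s : ℝ => s ^ a / (1 + s) ^ (a+k+2)) (Set.Ioi 0) ∧
    ∫ s in Set.Ioi (0:ℝ), s ^ a / (1 + s) ^ (a+k+2) =
      (a.factorial * k.factorial : ℝ) / (a+k+1).factorial := by
  intro a
  induction a with
  | zero =>
    have hd : ∀ s ∈ Set.Ici (0:ℝ), HasDerivAt (fun s : ℝ => -((k+1:ℝ)⁻¹ * ((1 + s) ^ (k+1))⁻¹))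
        (s ^ 0 / (1 + s) ^ (0+k+2)) s := by
      intro s hs
      have hs : 0 ≤ s := hs
      have hp : (1 + s) ≠ 0 := by positivity
      have h := ((((hasDerivAt_id s).const_add 1).pow (k+1)).inv (pow_ne_zero _ hp)).const_mul
        ((k+1:ℝ)⁻¹) |>.neg
      refine h.congr_deriv ?_
      have : (k+1:ℝ) ≠ 0 := by positivity
      simp
      field_simp
      ring
    have hl : Tendsto (fun s : ℝ => -((k+1:ℝ)⁻¹ * ((1 + s) ^ (k+1))⁻¹)) atTop (𝓝 0) := by
      have h1 : Tendsto (fun s : ℝ => ((1 + s) ^ (k+1))⁻¹) atTop (𝓝 0) :=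
        tendsto_inv_atTop_zero.comp ((tendsto_pow_atTop (by omega)).comp
          (tendsto_atTop_add_const_left _ 1 tendsto_id))
      simpa using (h1.const_mul ((k+1:ℝ)⁻¹)).neg
    have hnn : ∀ s ∈ Set.Ioi (0:ℝ), 0 ≤ s ^ 0 / (1 + s) ^ (0+k+2) := by
      intro s hs
      have hs : 0 < s := hs
      positivity
    refine ⟨integrableOn_Ioi_deriv_of_nonneg' hd hnn hl, ?_⟩
    rw [integral_Ioi_of_hasDerivAt_of_nonneg' hd hnn hl]
    simp [Nat.factorial_succ]
    field_simp
  | succ a ih =>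
    obtain ⟨hi, hv⟩ := ih
    have hint : IntegrableOn (fun s : ℝ => s ^ (a+1) / (1 + s) ^ (a+1+k+2)) (Set.Ioi 0) := by
      refine Integrable.mono' hi ?_ ?_
      · exact (Measurable.aestronglyMeasurable (by fun_prop))
      · refine (ae_restrict_iff' measurableSet_Ioi).2 (Eventually.of_forall ?_)
        intro s hs
        have hs : 0 < s := hs
        rw [Real.norm_of_nonneg (by positivity)]
        rw [div_le_div_iff₀ (by positivity) (by positivity)]
        have : s ^ a * (1 + s) ^ (a+1+k+2) = s^a * (1 + s) ^ (a+k+2) * (1+s) := by ring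
        rw [this, pow_succ]
        have h0 : 0 ≤ s^a * (1 + s) ^ (a+k+2) := by positivity
        nlinarith
    refine ⟨hint, ?_⟩
    have hd : ∀ s ∈ Set.Ici (0:ℝ), HasDerivAt (fun s : ℝ => s ^ (a+1) / (1 + s) ^ (a+k+2))
        ((a+1:ℝ) * (s ^ a / (1 + s) ^ (a+k+2))
          - (a+k+2:ℝ) * (s ^ (a+1) / (1 + s) ^ (a+1+k+2))) s := by
      intro s hs
      have hs : 0 ≤ s := hs
      have hp : (1 + s) ≠ 0 := by positivity
      have h := ((hasDerivAt_id s).pow (a+1)).div (((hasDerivAt_id s).const_add 1).pow (a+k+2))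
        (pow_ne_zero _ hp)
      refine h.congr_deriv ?_
      simp
      field_simp
      ring
    have hF := integral_Ioi_of_hasDerivAt_of_tendsto' hd
      ((hi.const_mul _).sub (hint.const_mul _)) (aux_lim a k)
    rw [integral_sub (hi.const_mul _) (hint.const_mul _), integral_const_mul,
      integral_const_mul, hv] at hF
    have hk : (a+k+2:ℝ) ≠ 0 := by positivity
    have e1 : (a+1+k+1).factorial = (a+k+2) * (a+k+1).factorial := by
      rw [show a+1+k+1 = (a+k+1)+1 by ring, Nat.factorial_succ]
    rw [e1, Nat.factorial_succ]
    push_cast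
    have hfa : ((a+k+1).factorial : ℝ) ≠ 0 := by positivity
    simp only [zero_pow (Nat.succ_ne_zero a), zero_div, sub_zero] at hF
    field_simp at hF ⊢
    linarith

lemma aux_term (k j : ℕ) (c : ℝ) :
    (c / betaB (j + 1) (k+2)) *
        ∫ s in Set.Ioi (0 : ℝ), s ^ j * (1 + s) ^ (-(((k+2:ℕ) : ℝ) + (j : ℝ) + 2)) * s ^ 2
      = c * (((j:ℝ)+1) * (j+2)) / ((k+2) * (k+1)) := by
  have h : ∫ s in Set.Ioi (0 : ℝ), s ^ j * (1 + s) ^ (-(((k+2:ℕ) : ℝ) + (j : ℝ) + 2)) * s ^ 2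
      = ∫ s in Set.Ioi (0:ℝ), s ^ (j+2) / (1 + s) ^ ((j+2)+k+2) := by
    refine setIntegral_congr_fun measurableSet_Ioi ?_
    intro s hs
    have hs : 0 < s := hs
    have : (((k+2:ℕ) : ℝ) + (j : ℝ) + 2) = ((j+2+k+2 : ℕ) : ℝ) := by push_cast; ring
    simp only
    rw [this, Real.rpow_neg (by positivity), Real.rpow_natCast]
    field_simp
    ring
  rw [h, (aux_int k (j+2)).2, betaB]
  have g1 : Real.Gamma ((j+1:ℕ):ℝ) = j.factorial := by
    push_cast; exact Real.Gamma_nat_eq_factorial j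
  have g2 : Real.Gamma (((k+2:ℕ):ℝ)+1) = (k+2).factorial := Real.Gamma_nat_eq_factorial _
  have g3 : Real.Gamma (((j+1:ℕ):ℝ) + ((k+2:ℕ):ℝ)+1) = (j+2+k+1).factorial := by
    rw [← Real.Gamma_nat_eq_factorial]; congr 1; push_cast; ring
  rw [g1, g2, g3, Nat.factorial_succ (j+1), Nat.factorial_succ j, Nat.factorial_succ (k+1),
    Nat.factorial_succ k]
  push_cast
  have := Nat.factorial_pos j
  have := Nat.factorial_pos k
  have := Nat.factorial_pos (j+2+k+1)
  field_simp
  ring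

lemma aux_summable (w : ℕ → ℝ) (hw : ∀ j, 0 ≤ w j) (s : ℝ) (hs : 1 < s)
    (h : Summable (fun j => w j * s ^ j)) (m : ℕ) : Summable (fun j => w j * (j:ℝ) ^ m) := by
  have ht := tendsto_pow_const_div_const_pow_of_one_lt m hs
  refine Summable.of_norm_bounded_eventually_nat h ?_
  filter_upwards [ht.eventually (gt_mem_nhds one_pos)] with j hj
  rw [Real.norm_of_nonneg (mul_nonneg (hw j) (by positivity))]
  rw [div_lt_one (by positivity)] at hj
  exact mul_le_mul_of_nonneg_left hj.le (hw j)

theorem stmt6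
    (ρ : ℝ) (hρ : 1 < ρ)
    (ξ S T U V : ℝ → ℝ) (Θ : ℕ → ℝ → ℝ)
    (p q r u v : ℕ → ℝ)
    (hξser : ∀ t : ℝ, HasSum (fun j : ℕ => p j * t ^ j) (ξ t))
    (hξnn : ∀ t : ℝ, 0 ≤ ξ t)
    (hSser : ∀ s ∈ Set.Ioo (-ρ) ρ, HasSum (fun j : ℕ => q j * s ^ j) (S s))
    (hTser : ∀ s ∈ Set.Ioo (-ρ) ρ, HasSum (fun j : ℕ => r j * s ^ (j + 1)) (T s))
    (hUser : ∀ s ∈ Set.Ioo (-ρ) ρ, HasSum (fun j : ℕ => u j * s ^ (j + 2)) (U s))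
    (hVser : ∀ s ∈ Set.Ioo (-ρ) ρ, HasSum (fun j : ℕ => v j * s ^ (j + 3)) (V s))
    (hS1 : 0 < S 1)
    (hT'1 : deriv T 1 = 0) (hT''1 : deriv (deriv T) 1 = 0) (hU'1 : deriv U 1 = 1)
    (hΘnn : ∀ (j : ℕ) (y : ℝ), 0 ≤ y → 0 ≤ Θ j y)
    (hgen : ∀ y : ℝ, 0 ≤ y → ∀ s ∈ Set.Ioo (-ρ) ρ,
      HasSum (fun j : ℕ => Θ j y * s ^ j) (S s * ξ (y ^ 2 * T s + y * U s + V s)))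
    (hξp : ∀ (m : ℕ), 1 ≤ m → ∀ y : ℝ, 0 ≤ y → 0 < ξ (pnx T U V m y))
    (n : ℕ) (hn : 2 ≤ n) (x : ℝ) (hx : 0 ≤ x) :
    BDop ξ S T U V Θ n (fun t => t ^ 2) x =
      (1 / ((n : ℝ) - 1)) *
        ((n : ℝ) * Bop ξ S T U V Θ n (fun t => t ^ 2) x +
          Bop ξ S T U V Θ n (fun t => t) x) := by
  obtain ⟨k, rfl⟩ : ∃ k, n = k + 2 := ⟨n - 2, by omega⟩
  have hy : 0 ≤ ((k+2:ℕ):ℝ) * x := by positivity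
  obtain ⟨s, hs1, hs2⟩ := exists_between hρ
  have hsum := (hgen _ hy s ⟨by linarith, hs2⟩).summable
  have hS := aux_summable (fun j => Θ j (((k+2:ℕ):ℝ) * x)) (fun j => hΘnn j _ hy) s hs1 hsum
  have h1 := hS 1
  have h2 := hS 2
  unfold BDop Bop
  simp only [aux_term]
  generalize (S 1 * ξ (pnx T U V (k+2) x))⁻¹ = C
  generalize ((k+2:ℕ):ℝ) * x = y at *
  have hk : ((k:ℝ)+2) ≠ 0 := by positivity
  have hk1 : ((k:ℝ)+1) ≠ 0 := by positivity
  have e2 : ∑' j : ℕ, Θ j y * ((j:ℝ) / ((k+2:ℕ):ℝ)) ^ 2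
      = (∑' j : ℕ, Θ j y * (j:ℝ) ^ 2) / (k+2) ^ 2 := by
    rw [← tsum_div_const]; congr 1; ext j; push_cast; field_simp
  have e1 : ∑' j : ℕ, Θ j y * ((j:ℝ) / ((k+2:ℕ):ℝ))
      = (∑' j : ℕ, Θ j y * (j:ℝ) ^ 1) / (k+2) := by
    rw [← tsum_div_const]; congr 1; ext j; push_cast; field_simp
  have e3 : ∑' j : ℕ, Θ (j+1) y * (((j:ℝ)+1) * (j+2)) / ((k+2) * (k+1))
      = (∑' j : ℕ, Θ j y * (j:ℝ) ^ 2 + ∑' j : ℕ, Θ j y * (j:ℝ) ^ 1) / ((k+2) * (k+1)) := by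
    rw [← h2.tsum_add h1, (h2.add h1).tsum_eq_zero_add, tsum_div_const]
    simp only [Nat.cast_zero]
    norm_num
    congr 2; ext j; ring
  rw [e1, e2, e3]
  push_cast
  rw [show ((k:ℝ) + 2 - 1) = k + 1 by ring]
  field_simp
  ring
end

section
/- For every integer n ≥ 2 and every x ≥ 0, the second central moment satisfies B̃_n((t−x)²;x) = [ (n/(n−1))·ξ''(p_n(x))/ξ(p_n(x)) − 2ξ'(p_n(x))/ξ(p_n(x)) + 1 ]·x² + [ (2/(n−1))·V'(1)·ξ''(p_n(x))/ξ(p_n(x)) + (1/(n−1))·(2 + U''(1) + 2S'(1)/S(1))·ξ'(p_n(x))/ξ(p_n(x)) − (2/n)·( V'(1)·ξ'(p_n(x))/ξ(p_n(x)) + S'(1)/S(1) ) ]·x + (1/(n(n−1)))·[ (V'(1))²·ξ''(p_n(x))/ξ(p_n(x)) + (2V'(1)S'(1)/S(1) + 2V'(1) + V''(1))·ξ'(p_n(x))/ξ(p_n(x)) + (2S'(1)+S''(1))/S(1) ], where B̃_n((t−x)²;x) denotes the operator applied to the function t ↦ (t−x)². -/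
open Real MeasureTheory Filter Topology

lemma aux_series (ρ : ℝ) (F : ℝ → ℝ) (a : ℕ → ℝ)
    (h : ∀ s ∈ Set.Ioo (-ρ) ρ, HasSum (fun j : ℕ => a j * s ^ j) (F s)) :
    ∀ s ∈ Set.Ioo (-ρ) ρ, HasDerivAt F (deriv F s) s ∧
      HasSum (fun j : ℕ => (((j : ℝ) + 1) * a (j + 1)) * s ^ j) (deriv F s) := by
  intro s hs
  have hs' : |s| < ρ := abs_lt.2 hs
  obtain ⟨R, hsR, hRρ⟩ := exists_between hs'
  obtain ⟨R', hRR', hR'ρ⟩ := exists_between hRρ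
  have hR0 : 0 < R := lt_of_le_of_lt (abs_nonneg s) hsR
  have hR'0 : 0 < R' := hR0.trans hRR'
  have hsum := (h R' ⟨by linarith, hR'ρ⟩).summable
  obtain ⟨C, hC⟩ := hsum.tendsto_atTop_zero.norm.bddAbove_range
  have hC' : ∀ j, |a j| * R' ^ j ≤ C := by
    intro j
    have := hC (Set.mem_range_self j)
    simpa [abs_mul, abs_of_pos hR'0] using this
  have hbs : Summable (fun j : ℕ => C / R * ((j : ℝ) ^ 1 * (R / R') ^ j)) := by
    apply Summable.mul_left
    apply summable_pow_mul_geometric_of_norm_lt_one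
    rw [Real.norm_of_nonneg (by positivity), div_lt_one hR'0]
    exact hRR'
  have hbd : ∀ (j : ℕ) (y : ℝ), y ∈ Set.Ioo (-R) R →
      ‖a j * ((j : ℝ) * y ^ (j - 1))‖ ≤ C / R * ((j : ℝ) ^ 1 * (R / R') ^ j) := by
    intro j y hy
    have hy' : |y| ≤ R := (abs_lt.2 hy).le
    rcases j with _ | j
    · simp
    have h1 : |y| ^ j ≤ R ^ j := pow_le_pow_left₀ (abs_nonneg y) hy' j
    have h2 : |a (j + 1)| ≤ C / R' ^ (j + 1) := by
      rw [le_div_iff₀ (by positivity)]; exact hC' _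
    have hCn : 0 ≤ C / R' ^ (j + 1) := (abs_nonneg _).trans h2
    rw [Real.norm_eq_abs, abs_mul, abs_mul, abs_pow, Nat.abs_cast, Nat.add_sub_cancel]
    calc |a (j + 1)| * (((j + 1 : ℕ) : ℝ) * |y| ^ j)
        ≤ (C / R' ^ (j + 1)) * (((j + 1 : ℕ) : ℝ) * R ^ j) := by gcongr
      _ = _ := by
        rw [div_pow, pow_succ R]
        field_simp
  have hmem : s ∈ Set.Ioo (-R) R := abs_lt.1 hsR
  have hd := hasDerivAt_tsum_of_isPreconnected (g := fun (j : ℕ) (z : ℝ) => a j * z ^ j)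
    (g' := fun (j : ℕ) (z : ℝ) => a j * ((j : ℝ) * z ^ (j - 1))) hbs isOpen_Ioo
    (isPreconnected_Ioo (a := -R) (b := R))
    (fun j y _ => (hasDerivAt_pow j y).const_mul (a j)) hbd hmem (h s hs).summable hmem
  have heq : F =ᶠ[𝓝 s] fun z => ∑' j : ℕ, a j * z ^ j := by
    filter_upwards [isOpen_Ioo.mem_nhds hs] with z hz using (h z hz).tsum_eq.symm
  have hF := hd.congr_of_eventuallyEq heq
  refine ⟨hF.differentiableAt.hasDerivAt, ?_⟩
  rw [hF.deriv]
  have hs2 : Summable (fun j : ℕ => a j * ((j : ℝ) * s ^ (j - 1))) :=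
    Summable.of_norm_bounded hbs (fun j => hbd j s hmem)
  have h3 := (hasSum_nat_add_iff' 1).2 hs2.hasSum
  simp only [Finset.range_one, Finset.sum_singleton, Nat.cast_zero, zero_mul, mul_zero,
    sub_zero, Nat.add_sub_cancel] at h3
  convert! h3 using 2 with j
  push_cast; ring

lemma aux_shift (ρ : ℝ) (F : ℝ → ℝ) (a : ℕ → ℝ) (k : ℕ)
    (h : ∀ s ∈ Set.Ioo (-ρ) ρ, HasSum (fun j : ℕ => a j * s ^ (j + k)) (F s)) :
    ∀ s ∈ Set.Ioo (-ρ) ρ,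
      HasSum (fun j : ℕ => (if j < k then 0 else a (j - k)) * s ^ j) (F s) := by
  intro s hs
  rw [← hasSum_nat_add_iff' k]
  have : ∑ i ∈ Finset.range k, (if i < k then 0 else a (i - k)) * s ^ i = 0 := by
    apply Finset.sum_eq_zero
    intro i hi
    simp [Finset.mem_range.1 hi]
  rw [this, sub_zero]
  simpa using h s hs

lemma aux_two (ρ : ℝ) (F : ℝ → ℝ) (a : ℕ → ℝ)
    (h : ∀ s ∈ Set.Ioo (-ρ) ρ, HasSum (fun j : ℕ => a j * s ^ j) (F s)) :
    ∀ s ∈ Set.Ioo (-ρ) ρ, HasDerivAt F (deriv F s) s ∧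
      HasDerivAt (deriv F) (deriv (deriv F) s) s := by
  intro s hs
  exact ⟨(aux_series ρ F a h s hs).1,
    (aux_series ρ (deriv F) _ (fun t ht => (aux_series ρ F a h t ht).2) s hs).1⟩

lemma aux_lim0 : Tendsto (fun s : ℝ => 1 / (1 + s)) atTop (𝓝 0) := by
  have : Tendsto (fun s : ℝ => 1 + s) atTop atTop := tendsto_atTop_add_const_left _ _ tendsto_id
  simp only [one_div]
  exact this.inv_tendsto_atTop

lemma aux_lim1 : Tendsto (fun s : ℝ => s / (1 + s)) atTop (𝓝 1) := by
  have h := (tendsto_const_nhds (x := (1 : ℝ))).sub aux_lim0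
  rw [sub_zero] at h
  refine h.congr' ?_
  filter_upwards [eventually_gt_atTop 0] with s hs
  field_simp
  ring

lemma aux_der (a b : ℕ) (s : ℝ) (hs : 0 ≤ s) :
    HasDerivAt (fun s : ℝ => s ^ (a + 1) / (1 + s) ^ (b + 1))
      (((a : ℝ) + 1) * (s ^ a / (1 + s) ^ (b + 1))
        - ((b : ℝ) + 1) * (s ^ (a + 1) / (1 + s) ^ (b + 2))) s := by
  have h1 : (1 + s) ≠ 0 := by positivity
  have h := (hasDerivAt_pow (a + 1) s).div
    (((hasDerivAt_id s).const_add 1).pow (b + 1)) (pow_ne_zero _ h1)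
  convert! h using 1
  simp only [Pi.pow_apply, id, Nat.add_sub_cancel]
  push_cast
  field_simp
  ring

lemma aux_base (j : ℕ) :
    IntegrableOn (fun s : ℝ => s ^ j / (1 + s) ^ (j + 2)) (Set.Ioi 0) ∧
    ∫ s in Set.Ioi (0 : ℝ), s ^ j / (1 + s) ^ (j + 2) = 1 / ((j : ℝ) + 1) := by
  have hder : ∀ s ∈ Set.Ici (0 : ℝ), HasDerivAt
      (fun s : ℝ => (s ^ (j + 1) / (1 + s) ^ (j + 1)) / ((j : ℝ) + 1))
      (s ^ j / (1 + s) ^ (j + 2)) s := by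
    intro s hs
    have hs : 0 ≤ s := hs
    convert! (aux_der j j s hs).div_const ((j : ℝ) + 1) using 1
    have h1 : (1 + s) ≠ 0 := by positivity
    field_simp
    ring
  have hpos : ∀ s ∈ Set.Ioi (0 : ℝ), 0 ≤ s ^ j / (1 + s) ^ (j + 2) := by
    intro s hs
    have hs : 0 < s := hs
    positivity
  have hlim : Tendsto (fun s : ℝ => (s ^ (j + 1) / (1 + s) ^ (j + 1)) / ((j : ℝ) + 1)) atTop
      (𝓝 (1 / ((j : ℝ) + 1))) := by
    have := (aux_lim1.pow (j + 1)).div_const ((j : ℝ) + 1)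
    simpa [div_pow] using this
  refine ⟨integrableOn_Ioi_deriv_of_nonneg' hder hpos hlim, ?_⟩
  rw [integral_Ioi_of_hasDerivAt_of_nonneg' hder hpos hlim]
  simp

lemma aux_int_s8 (j m : ℕ) :
    IntegrableOn (fun s : ℝ => s ^ j / (1 + s) ^ (j + m + 2)) (Set.Ioi 0) := by
  refine Integrable.mono' (aux_base j).1 ?_ ?_
  · apply Measurable.aestronglyMeasurable
    fun_prop
  · filter_upwards [ae_restrict_mem measurableSet_Ioi] with s hs
    have hs : 0 < s := hs
    rw [Real.norm_of_nonneg (by positivity)]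
    apply div_le_div_of_nonneg_left (by positivity) (by positivity)
    apply pow_le_pow_right₀ (by linarith)
    omega

lemma aux_rec (j m : ℕ) :
    ((j : ℝ) + 1) * ∫ s in Set.Ioi (0 : ℝ), s ^ j / (1 + s) ^ (j + (m + 1) + 2) =
    ((m : ℝ) + 1) * ∫ s in Set.Ioi (0 : ℝ), s ^ (j + 1) / (1 + s) ^ (j + 1 + m + 2) := by
  have i1 := (aux_int_s8 j (m + 1)).const_mul ((j : ℝ) + 1)
  have i2 := (aux_int_s8 (j + 1) m).const_mul ((m : ℝ) + 1)
  have hder : ∀ s ∈ Set.Ici (0 : ℝ), HasDerivAt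
      (fun s : ℝ => s ^ (j + 1) / (1 + s) ^ (j + m + 1 + 1))
      (((j : ℝ) + 1) * (s ^ j / (1 + s) ^ (j + (m + 1) + 2)) -
        ((m : ℝ) + 1) * (s ^ (j + 1) / (1 + s) ^ (j + 1 + m + 2))) s := by
    intro s hs
    have hs : 0 ≤ s := hs
    convert! aux_der j (j + m + 1) s hs using 1
    have h1 : (1 + s) ≠ 0 := by positivity
    have e1 : j + (m + 1) + 2 = (j + m + 2) + 1 := by ring
    have e2 : j + 1 + m + 2 = (j + m + 2) + 1 := by ring
    have e3 : j + m + 1 + 2 = (j + m + 2) + 1 := by ring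
    have e4 : j + m + 1 + 1 = (j + m + 2) := by ring
    rw [e1, e2, e3, e4, pow_succ (1 + s) (j + m + 2), pow_succ s j]
    push_cast
    field_simp
    ring
  have hlim : Tendsto (fun s : ℝ => s ^ (j + 1) / (1 + s) ^ (j + m + 1 + 1)) atTop (𝓝 0) := by
    have := (aux_lim1.pow (j + 1)).mul (aux_lim0.pow (m + 1))
    rw [zero_pow (by omega), mul_zero] at this
    refine this.congr fun s => ?_
    rw [div_pow, div_pow, one_pow, div_mul_div_comm, mul_one, ← pow_add]
    congr 2; ring
  have h := integral_Ioi_of_hasDerivAt_of_tendsto' hder (i1.sub i2) hlim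
  rw [integral_sub i1 i2, integral_const_mul, integral_const_mul] at h
  simp at h
  linarith

lemma aux_val (m : ℕ) : ∀ j : ℕ,
    ∫ s in Set.Ioi (0 : ℝ), s ^ j / (1 + s) ^ (j + m + 2) =
      (Nat.factorial j : ℝ) * Nat.factorial m / Nat.factorial (j + m + 1) := by
  induction m with
  | zero =>
    intro j
    rw [show j + 0 + 2 = j + 2 from rfl, (aux_base j).2]
    simp [Nat.factorial_succ]
    field_simp
  | succ m ih =>
    intro j
    have h := aux_rec j m
    rw [ih (j + 1)] at h
    have hj : ((j : ℝ) + 1) ≠ 0 := by positivity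
    rw [show j + 1 + m + 1 = j + (m + 1) + 1 by ring] at h
    have hf : (Nat.factorial (j + (m + 1) + 1) : ℝ) ≠ 0 := by positivity
    apply mul_left_cancel₀ hj
    rw [h, Nat.factorial_succ j, Nat.factorial_succ m]
    push_cast
    field_simp

lemma aux_beta (j n : ℕ) : betaB (j + 1) n =
    (Nat.factorial j : ℝ) * Nat.factorial n / Nat.factorial (j + n + 1) := by
  unfold betaB
  have e : (((j + 1 : ℕ) : ℝ) + (n : ℝ) + 1) = ((j + n + 1 : ℕ) : ℝ) + 1 := by push_cast; ring
  rw [e, Real.Gamma_nat_eq_factorial, Real.Gamma_nat_eq_factorial, Nat.cast_succ,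
    Real.Gamma_nat_eq_factorial]

lemma aux_moment (j n : ℕ) (hn : 2 ≤ n) (x : ℝ) :
    (∫ s in Set.Ioi (0 : ℝ), s ^ j * (1 + s) ^ (-((n : ℝ) + (j : ℝ) + 2)) * (s - x) ^ 2)
      / betaB (j + 1) n =
    ((j : ℝ) + 1) * ((j : ℝ) + 2) / ((n : ℝ) * ((n : ℝ) - 1))
      - 2 * x * (((j : ℝ) + 1) / n) + x ^ 2 := by
  obtain ⟨m, rfl⟩ : ∃ m, n = m + 2 := ⟨n - 2, by omega⟩
  have i2 := aux_int_s8 (j + 2) m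
  have i1 := (aux_int_s8 (j + 1) (m + 1)).const_mul (2 * x)
  have i0 := (aux_int_s8 j (m + 2)).const_mul (x ^ 2)
  have hI : (∫ s in Set.Ioi (0 : ℝ),
        s ^ j * (1 + s) ^ (-(((m + 2 : ℕ) : ℝ) + (j : ℝ) + 2)) * (s - x) ^ 2)
      = ∫ s in Set.Ioi (0 : ℝ), (s ^ (j + 2) / (1 + s) ^ (j + 2 + m + 2)
        - 2 * x * (s ^ (j + 1) / (1 + s) ^ (j + 1 + (m + 1) + 2))
        + x ^ 2 * (s ^ j / (1 + s) ^ (j + (m + 2) + 2))) := by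
    apply setIntegral_congr_fun measurableSet_Ioi
    intro s hs
    have hs : 0 < s := hs
    have h1 : 0 < 1 + s := by positivity
    have e : (((m + 2 : ℕ) : ℝ) + (j : ℝ) + 2) = ((j + m + 4 : ℕ) : ℝ) := by push_cast; ring
    simp only
    rw [e, Real.rpow_neg h1.le, Real.rpow_natCast,
      show j + 2 + m + 2 = j + m + 4 by ring, show j + 1 + (m + 1) + 2 = j + m + 4 by ring,
      show j + (m + 2) + 2 = j + m + 4 by ring]
    field_simp
    ring
  have i21 : Integrable (fun s : ℝ => s ^ (j + 2) / (1 + s) ^ (j + 2 + m + 2)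
        - 2 * x * (s ^ (j + 1) / (1 + s) ^ (j + 1 + (m + 1) + 2)))
        (volume.restrict (Set.Ioi 0)) := i2.sub i1
  rw [hI, integral_add i21 i0, integral_sub i2 i1, integral_const_mul,
    integral_const_mul, aux_val, aux_val, aux_val, aux_beta,
    show j + 2 + m + 1 = j + m + 3 by ring, show j + 1 + (m + 1) + 1 = j + m + 3 by ring,
    show j + (m + 2) + 1 = j + m + 3 by ring]
  have hf : (Nat.factorial (j + m + 3) : ℝ) ≠ 0 := by positivity
  have hj : (Nat.factorial j : ℝ) ≠ 0 := by positivity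
  have hm : (Nat.factorial m : ℝ) ≠ 0 := by positivity
  have h1 : (m : ℝ) + 1 ≠ 0 := by positivity
  have h2 : (m : ℝ) + 2 ≠ 0 := by positivity
  have h3 : ((m + 2 : ℕ) : ℝ) - 1 = (m : ℝ) + 1 := by push_cast; ring
  rw [h3]
  simp only [Nat.factorial_succ]
  push_cast
  have h4 : (m : ℝ) + 1 + 1 ≠ 0 := by positivity
  rw [show (m : ℝ) + 1 + 1 = m + 2 by ring, show (j : ℝ) + 1 + 1 = j + 2 by ring]
  have a1 : (j : ℝ) + (m + 2) + 1 ≠ 0 := by positivity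
  field_simp

lemma aux_chain (ρ y : ℝ) (hρ : 1 < ρ) (ξ S T U V : ℝ → ℝ)
    (hξ : ∀ t, HasDerivAt ξ (deriv ξ t) t ∧ HasDerivAt (deriv ξ) (deriv (deriv ξ) t) t)
    (hS : ∀ t ∈ Set.Ioo (-ρ) ρ, HasDerivAt S (deriv S t) t ∧
      HasDerivAt (deriv S) (deriv (deriv S) t) t)
    (hT : ∀ t ∈ Set.Ioo (-ρ) ρ, HasDerivAt T (deriv T t) t ∧
      HasDerivAt (deriv T) (deriv (deriv T) t) t)
    (hU : ∀ t ∈ Set.Ioo (-ρ) ρ, HasDerivAt U (deriv U t) t ∧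
      HasDerivAt (deriv U) (deriv (deriv U) t) t)
    (hV : ∀ t ∈ Set.Ioo (-ρ) ρ, HasDerivAt V (deriv V t) t ∧
      HasDerivAt (deriv V) (deriv (deriv V) t) t)
    (hT'1 : deriv T 1 = 0) (hT''1 : deriv (deriv T) 1 = 0) (hU'1 : deriv U 1 = 1)
    (P : ℝ) (hP : P = y ^ 2 * T 1 + y * U 1 + V 1)
    (G : ℝ → ℝ) (hG : G = fun s => S s * ξ (y ^ 2 * T s + y * U s + V s)) :
    deriv G 1 = deriv S 1 * ξ P + S 1 * (deriv ξ P * (y + deriv V 1)) ∧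
    deriv (deriv G) 1 = deriv (deriv S) 1 * ξ P
      + 2 * (deriv S 1 * (deriv ξ P * (y + deriv V 1)))
      + S 1 * (deriv (deriv ξ) P * (y + deriv V 1) ^ 2
        + deriv ξ P * (y * deriv (deriv U) 1 + deriv (deriv V) 1)) := by
  have h1 : (1 : ℝ) ∈ Set.Ioo (-ρ) ρ := ⟨by linarith, hρ⟩
  have hPd : ∀ t ∈ Set.Ioo (-ρ) ρ, HasDerivAt (fun s => y ^ 2 * T s + y * U s + V s)
      (y ^ 2 * deriv T t + y * deriv U t + deriv V t) t := fun t ht =>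
    (((hT t ht).1.const_mul (y ^ 2)).add ((hU t ht).1.const_mul y)).add (hV t ht).1
  have hPd2 : HasDerivAt (fun s => y ^ 2 * deriv T s + y * deriv U s + deriv V s)
      (y ^ 2 * deriv (deriv T) 1 + y * deriv (deriv U) 1 + deriv (deriv V) 1) 1 :=
    (((hT 1 h1).2.const_mul (y ^ 2)).add ((hU 1 h1).2.const_mul y)).add (hV 1 h1).2
  have hGd : ∀ t ∈ Set.Ioo (-ρ) ρ, HasDerivAt G
      (deriv S t * ξ (y ^ 2 * T t + y * U t + V t) + S t *
        (deriv ξ (y ^ 2 * T t + y * U t + V t) *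
          (y ^ 2 * deriv T t + y * deriv U t + deriv V t))) t := by
    intro t ht
    rw [hG]
    exact (hS t ht).1.mul ((hξ _).1.comp t (hPd t ht))
  have heq : deriv G =ᶠ[𝓝 1] fun t =>
      (deriv S t * ξ (y ^ 2 * T t + y * U t + V t) + S t *
        (deriv ξ (y ^ 2 * T t + y * U t + V t) *
          (y ^ 2 * deriv T t + y * deriv U t + deriv V t))) := by
    filter_upwards [isOpen_Ioo.mem_nhds h1] with t ht using (hGd t ht).deriv
  have hxi1 : HasDerivAt (fun t => ξ (y ^ 2 * T t + y * U t + V t)) _ 1 :=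
    (hξ _).1.comp 1 (hPd 1 h1)
  have hxi2 : HasDerivAt (fun t => deriv ξ (y ^ 2 * T t + y * U t + V t)) _ 1 :=
    (hξ _).2.comp 1 (hPd 1 h1)
  have hd2 := ((hS 1 h1).2.mul hxi1).add ((hS 1 h1).1.mul (hxi2.mul hPd2))
  constructor
  · rw [(hGd 1 h1).deriv, ← hP, hT'1, hU'1]
    ring
  · rw [heq.deriv_eq]
    refine hd2.deriv.trans ?_
    simp only [Pi.mul_apply, ← hP, hT'1, hU'1, hT''1]
    ring

theorem stmt8
    (ρ : ℝ) (hρ : 1 < ρ)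
    (ξ S T U V : ℝ → ℝ) (Θ : ℕ → ℝ → ℝ)
    (p q r u v : ℕ → ℝ)
    (hξser : ∀ t : ℝ, HasSum (fun j : ℕ => p j * t ^ j) (ξ t))
    (hξnn : ∀ t : ℝ, 0 ≤ ξ t)
    (hSser : ∀ s ∈ Set.Ioo (-ρ) ρ, HasSum (fun j : ℕ => q j * s ^ j) (S s))
    (hTser : ∀ s ∈ Set.Ioo (-ρ) ρ, HasSum (fun j : ℕ => r j * s ^ (j + 1)) (T s))
    (hUser : ∀ s ∈ Set.Ioo (-ρ) ρ, HasSum (fun j : ℕ => u j * s ^ (j + 2)) (U s))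
    (hVser : ∀ s ∈ Set.Ioo (-ρ) ρ, HasSum (fun j : ℕ => v j * s ^ (j + 3)) (V s))
    (hS1 : 0 < S 1)
    (hT'1 : deriv T 1 = 0) (hT''1 : deriv (deriv T) 1 = 0) (hU'1 : deriv U 1 = 1)
    (hΘnn : ∀ (j : ℕ) (y : ℝ), 0 ≤ y → 0 ≤ Θ j y)
    (hgen : ∀ y : ℝ, 0 ≤ y → ∀ s ∈ Set.Ioo (-ρ) ρ,
      HasSum (fun j : ℕ => Θ j y * s ^ j) (S s * ξ (y ^ 2 * T s + y * U s + V s)))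
    (hξp : ∀ (m : ℕ), 1 ≤ m → ∀ y : ℝ, 0 ≤ y → 0 < ξ (pnx T U V m y))
    (n : ℕ) (hn : 2 ≤ n) (x : ℝ) (hx : 0 ≤ x) :
    BDop ξ S T U V Θ n (fun t => (t - x) ^ 2) x =
      ((n : ℝ) / ((n : ℝ) - 1) *
            (deriv (deriv ξ) (pnx T U V n x) / ξ (pnx T U V n x)) -
          2 * (deriv ξ (pnx T U V n x) / ξ (pnx T U V n x)) + 1) * x ^ 2 +
        (2 / ((n : ℝ) - 1) * deriv V 1 *
            (deriv (deriv ξ) (pnx T U V n x) / ξ (pnx T U V n x)) +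
          1 / ((n : ℝ) - 1) * (2 + deriv (deriv U) 1 + 2 * deriv S 1 / S 1) *
            (deriv ξ (pnx T U V n x) / ξ (pnx T U V n x)) -
          2 / (n : ℝ) *
            (deriv V 1 * (deriv ξ (pnx T U V n x) / ξ (pnx T U V n x)) +
              deriv S 1 / S 1)) * x +
        (1 / ((n : ℝ) * ((n : ℝ) - 1))) *
          ((deriv V 1) ^ 2 * (deriv (deriv ξ) (pnx T U V n x) / ξ (pnx T U V n x)) +
            (2 * deriv V 1 * deriv S 1 / S 1 + 2 * deriv V 1 + deriv (deriv V) 1) *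
              (deriv ξ (pnx T U V n x) / ξ (pnx T U V n x)) +
            (2 * deriv S 1 + deriv (deriv S) 1) / S 1) := by
  have h1 : (1 : ℝ) ∈ Set.Ioo (-ρ) ρ := ⟨by linarith, hρ⟩
  have hξ : ∀ t, HasDerivAt ξ (deriv ξ t) t ∧ HasDerivAt (deriv ξ) (deriv (deriv ξ) t) t := by
    intro t
    refine aux_two (|t| + 1) ξ p (fun s _ => hξser s) t (abs_lt.1 (by linarith))
  have hS := aux_two ρ S q hSser
  have hT := aux_two ρ T _ (aux_shift ρ T r 1 hTser)
  have hU := aux_two ρ U _ (aux_shift ρ U u 2 hUser)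
  have hV := aux_two ρ V _ (aux_shift ρ V v 3 hVser)
  have hy : 0 ≤ (n : ℝ) * x := by positivity
  obtain ⟨y, hydef⟩ : ∃ y, y = (n : ℝ) * x := ⟨_, rfl⟩
  obtain ⟨P, hPdef⟩ : ∃ P, P = pnx T U V n x := ⟨_, rfl⟩
  have hP : P = y ^ 2 * T 1 + y * U 1 + V 1 := by
    rw [hPdef, hydef, pnx]; ring
  obtain ⟨G, hG⟩ : ∃ G : ℝ → ℝ, G = fun s => S s * ξ (y ^ 2 * T s + y * U s + V s) := ⟨_, rfl⟩
  obtain ⟨hG1, hG2⟩ := aux_chain ρ y hρ ξ S T U V hξ hS hT hU hV hT'1 hT''1 hU'1 P hP G hG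
  have hser : ∀ s ∈ Set.Ioo (-ρ) ρ, HasSum (fun j : ℕ => Θ j y * s ^ j) (G s) := by
    intro s hs
    rw [hG]
    exact hgen y (hydef ▸ hy) s hs
  have hser1 := fun s hs => (aux_series ρ G _ hser s hs).2
  have s0 := hser 1 h1
  have s1 := hser1 1 h1
  have s2 := (aux_series ρ _ _ hser1 1 h1).2
  simp only [one_pow, mul_one] at s0 s1 s2
  have s0' := (hasSum_nat_add_iff' 1).2 s0
  simp only [Finset.range_one, Finset.sum_singleton] at s0'
  have s2' : HasSum (fun j : ℕ => (j : ℝ) * (((j : ℝ) + 1) * Θ (j + 1) y)) (deriv (deriv G) 1) := by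
    rw [← hasSum_nat_add_iff' 1]
    simpa using s2
  have hxiP : 0 < ξ P := by
    rw [hPdef]; exact hξp n (by omega) x hx
  have hG0 : G 1 = S 1 * ξ P := by rw [hG, hP]
  have hn' : (2 : ℝ) ≤ n := by exact_mod_cast hn
  have hn0 : (n : ℝ) ≠ 0 := by positivity
  have hn1 : (n : ℝ) - 1 ≠ 0 := by
    have : (0 : ℝ) < n - 1 := by linarith
    exact this.ne'
  have htot := (((s2'.add (s1.mul_left 2)).mul_left (1 / ((n : ℝ) * ((n : ℝ) - 1)))).sub
    (s1.mul_left (2 * x / n))).add (s0'.mul_left (x ^ 2))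
  have hsum : ∑' j : ℕ, (Θ (j + 1) ((n : ℝ) * x) / betaB (j + 1) n) *
        ∫ s in Set.Ioi (0 : ℝ), s ^ j * (1 + s) ^ (-((n : ℝ) + (j : ℝ) + 2)) * (s - x) ^ 2 =
      1 / ((n : ℝ) * ((n : ℝ) - 1)) * (deriv (deriv G) 1 + 2 * deriv G 1)
        - 2 * x / n * deriv G 1 + x ^ 2 * (G 1 - Θ 0 y) := by
    rw [← htot.tsum_eq]
    apply tsum_congr
    intro j
    rw [div_mul_eq_mul_div, mul_div_assoc, aux_moment j n hn x, ← hydef]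
    field_simp
  unfold BDop
  simp only
  rw [hsum, ← hPdef, ← hydef, hG1, hG2, hG0, hydef]
  have hS1' := hS1.ne'
  have hxi' := hxiP.ne'
  field_simp
  ring
end
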